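/- Let q* ∈ [1,2], and let u, v ∈ ℝⁿ be unit vectors with ⟨u, v⟩ ≥ 0, ‖v‖_{q*} ≤ κ₁, and ‖u‖_{q*} ≤ κ₂. Let γ := ‖u − v‖₂ and suppose γ > 0. Then every unit vector z in the linear span of {u, v} satisfies ‖z‖_{q*} ≤ (2√2/γ)·(κ₁ + κ₂). -/

import Mathlib

/-!
Write `z = a • u + b • v`. Removing the component along `v` shrinks norms and kills `b • v`, so
`1 = ‖z‖² ≥ ‖a‖² (1 - ‖⟪v, u⟫‖²)`. When `0 ≤ ⟪v, u⟫`, the last factor is at least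
`1 - ⟪v, u⟫ = ‖u - v‖² / 2`; hence `‖a‖ ≤ √2 / ‖u - v‖`, and symmetrically for `b`. The triangle
inequality for the `ℓ_q` norm concludes, as it would for any other seminorm.
-/

open scoped BigOperators ENNReal
open Matrix

/-- The `ℓ_q` norm of a real vector, for `q ∈ [1,∞]` given as an extended nonnegative real
(`q = ⊤` is the max/sup norm). -/
noncomputable def vecNorm {ι : Type*} [Fintype ι] (q : ℝ≥0∞) (v : ι → ℝ) : ℝ :=
  if q = ⊤ then ⨆ i, |v i| else (∑ i, |v i| ^ q.toReal) ^ (1 / q.toReal)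

/-- The `q → p` operator norm of a real matrix:
`‖M‖_{q→p} = sup { ‖Mx‖_p : ‖x‖_q ≤ 1 }`. -/
noncomputable def opNorm {ι₁ ι₂ : Type*} [Fintype ι₁] [Fintype ι₂] (q p : ℝ≥0∞)
    (M : Matrix ι₁ ι₂ ℝ) : ℝ :=
  sSup {y : ℝ | ∃ x : ι₂ → ℝ, vecNorm q x ≤ 1 ∧ y = vecNorm p (M.mulVec x)}

/-- The squared Frobenius norm of a real matrix. -/
noncomputable def frobSq {ι₁ ι₂ : Type*} [Fintype ι₁] [Fintype ι₂] (M : Matrix ι₁ ι₂ ℝ) : ℝ :=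
  ∑ i, ∑ j, (M i j) ^ 2

section InnerProductSpace

open scoped InnerProductSpace ComplexOrder

variable {𝕜 E : Type*} [RCLike 𝕜] [NormedAddCommGroup E] [InnerProductSpace 𝕜 E] {u v z : E}

lemma norm_sub_inner_smul_sq (hv : ‖v‖ = 1) (x : E) :
    ‖x - ⟪v, x⟫_𝕜 • v‖ ^ 2 = ‖x‖ ^ 2 - ‖⟪v, x⟫_𝕜‖ ^ 2 := by
  have pythagoras := (𝕜 ∙ v).norm_sq_eq_add_norm_sq_starProjection x
  rw [Submodule.starProjection_orthogonal_val,
    Submodule.starProjection_unit_singleton 𝕜 hv, norm_smul, hv, mul_one] at pythagoras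
  linarith

lemma norm_sq_mul_norm_sq_sub_norm_inner_sq_le (hv : ‖v‖ = 1) (u : E) (a b : 𝕜) :
    ‖a‖ ^ 2 * (‖u‖ ^ 2 - ‖⟪v, u⟫_𝕜‖ ^ 2) ≤ ‖a • u + b • v‖ ^ 2 := by
  have hvv : ⟪v, v⟫_𝕜 = 1 := inner_self_eq_one_of_norm_eq_one hv
  have residual : a • u + b • v - ⟪v, a • u + b • v⟫_𝕜 • v = a • (u - ⟪v, u⟫_𝕜 • v) := by
    rw [inner_add_right, inner_smul_right, inner_smul_right, hvv]
    module
  calc ‖a‖ ^ 2 * (‖u‖ ^ 2 - ‖⟪v, u⟫_𝕜‖ ^ 2)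
      = ‖a • (u - ⟪v, u⟫_𝕜 • v)‖ ^ 2 := by
        rw [norm_smul, mul_pow, norm_sub_inner_smul_sq hv]
    _ = ‖a • u + b • v‖ ^ 2 - ‖⟪v, a • u + b • v⟫_𝕜‖ ^ 2 := by
        rw [← residual, norm_sub_inner_smul_sq hv]
    _ ≤ ‖a • u + b • v‖ ^ 2 := sub_le_self _ (sq_nonneg _)

lemma norm_sub_sq_le_two_mul_one_sub_norm_inner_sq (hu : ‖u‖ = 1) (hv : ‖v‖ = 1)
    (huv : 0 ≤ ⟪v, u⟫_𝕜) : ‖u - v‖ ^ 2 ≤ 2 * (1 - ‖⟪v, u⟫_𝕜‖ ^ 2) := by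
  have hre : RCLike.re ⟪u, v⟫_𝕜 = ‖⟪v, u⟫_𝕜‖ := by
    rw [inner_re_symm]
    simpa using (congrArg RCLike.re (RCLike.norm_of_nonneg' huv)).symm
  have hle : ‖⟪v, u⟫_𝕜‖ ≤ 1 := by simpa [hu, hv] using norm_inner_le_norm (𝕜 := 𝕜) v u
  rw [norm_sub_sq (𝕜 := 𝕜), hu, hv, hre]
  linarith [pow_le_of_le_one (norm_nonneg ⟪v, u⟫_𝕜) hle two_ne_zero]

lemma norm_mul_norm_sub_le_sqrt_two_mul_norm_smul_add_smul (hu : ‖u‖ = 1) (hv : ‖v‖ = 1)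
    (huv : 0 ≤ ⟪v, u⟫_𝕜) (a b : 𝕜) :
    ‖a‖ * ‖u - v‖ ≤ √2 * ‖a • u + b • v‖ := by
  refine le_of_sq_le_sq ?_ (by positivity)
  calc (‖a‖ * ‖u - v‖) ^ 2
      ≤ ‖a‖ ^ 2 * (2 * (1 - ‖⟪v, u⟫_𝕜‖ ^ 2)) := by
        rw [mul_pow]
        gcongr
        exact norm_sub_sq_le_two_mul_one_sub_norm_inner_sq hu hv huv
    _ = 2 * (‖a‖ ^ 2 * (1 - ‖⟪v, u⟫_𝕜‖ ^ 2)) := by ring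
    _ ≤ 2 * ‖a • u + b • v‖ ^ 2 := by
        gcongr
        simpa only [hu, one_pow] using norm_sq_mul_norm_sq_sub_norm_inner_sq_le hv u a b
    _ = (√2 * ‖a • u + b • v‖) ^ 2 := by rw [mul_pow, Real.sq_sqrt zero_le_two]

theorem seminorm_le_of_mem_span_pair (p : Seminorm 𝕜 E) (hu : ‖u‖ = 1) (hv : ‖v‖ = 1)
    (huv : 0 ≤ ⟪v, u⟫_𝕜) (hne : u ≠ v) (hz : z ∈ Submodule.span 𝕜 {u, v}) :
    p z ≤ √2 * ‖z‖ / ‖u - v‖ * (p u + p v) := by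
  obtain ⟨a, b, rfl⟩ := Submodule.mem_span_pair.1 hz
  have hpos : 0 < ‖u - v‖ := norm_sub_pos_iff.2 hne
  have hvu : 0 ≤ ⟪u, v⟫_𝕜 := by rwa [← inner_conj_symm, starRingEnd_apply, star_nonneg_iff]
  have ha : ‖a‖ ≤ √2 * ‖a • u + b • v‖ / ‖u - v‖ :=
    (le_div_iff₀ hpos).2 (norm_mul_norm_sub_le_sqrt_two_mul_norm_smul_add_smul hu hv huv a b)
  have hb : ‖b‖ ≤ √2 * ‖a • u + b • v‖ / ‖u - v‖ := by
    rw [le_div_iff₀ hpos, norm_sub_rev, add_comm]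
    exact norm_mul_norm_sub_le_sqrt_two_mul_norm_smul_add_smul hv hu hvu b a
  calc p (a • u + b • v)
      ≤ ‖a‖ * p u + ‖b‖ * p v := by
        simpa only [map_smul_eq_mul] using map_add_le_add p (a • u) (b • v)
    _ ≤ √2 * ‖a • u + b • v‖ / ‖u - v‖ * p u + √2 * ‖a • u + b • v‖ / ‖u - v‖ * p v := by
        gcongr
    _ = √2 * ‖a • u + b • v‖ / ‖u - v‖ * (p u + p v) := (mul_add _ _ _).symm

end InnerProductSpace

section VecNorm

variable {ι : Type*} [Fintype ι]

lemma vecNorm_nonneg (q : ℝ≥0∞) (x : ι → ℝ) : 0 ≤ vecNorm q x := by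
  unfold vecNorm
  split_ifs
  · exact Real.iSup_nonneg fun i => abs_nonneg (x i)
  · positivity

lemma vecNorm_eq_norm_toLp {q : ℝ≥0∞} (hq : q ≠ 0) (x : ι → ℝ) :
    vecNorm q x = ‖WithLp.toLp q x‖ := by
  by_cases htop : q = ⊤
  · subst htop
    rw [vecNorm, if_pos rfl, PiLp.norm_eq_ciSup]
    rfl
  · rw [vecNorm, if_neg htop, PiLp.norm_eq_sum (ENNReal.toReal_pos hq htop)]
    rfl

/-- The `ℓ_q` norm as a seminorm on Euclidean space, whose own norm is the `ℓ_2` norm. -/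
noncomputable def euclideanLpSeminorm (ι : Type*) [Fintype ι] (q : ℝ≥0∞) [Fact (1 ≤ q)] :
    Seminorm ℝ (EuclideanSpace ℝ ι) :=
  (normSeminorm ℝ (PiLp q fun _ : ι => ℝ)).comp
    ((WithLp.linearEquiv q ℝ (ι → ℝ)).symm.toLinearMap ∘ₗ
      (WithLp.linearEquiv 2 ℝ (ι → ℝ)).toLinearMap)

lemma euclideanLpSeminorm_toLp (q : ℝ≥0∞) [Fact (1 ≤ q)] (x : ι → ℝ) :
    euclideanLpSeminorm ι q (WithLp.toLp 2 x) = vecNorm q x :=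
  (vecNorm_eq_norm_toLp (zero_lt_one.trans_le Fact.out).ne' x).symm

theorem span_sparsity_bound_general {q : ℝ≥0∞} (hq : 1 ≤ q) {u v z : ι → ℝ}
    (hu : vecNorm 2 u = 1) (hv : vecNorm 2 v = 1) (huv : 0 ≤ ∑ i, u i * v i)
    (hpos : 0 < vecNorm 2 (u - v)) (hz : z ∈ Submodule.span ℝ {u, v}) (hz2 : vecNorm 2 z = 1) :
    vecNorm q z ≤ √2 / vecNorm 2 (u - v) * (vecNorm q v + vecNorm q u) := by
  have : Fact (1 ≤ q) := ⟨hq⟩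
  obtain ⟨a, b, rfl⟩ := Submodule.mem_span_pair.1 hz
  have hz' : WithLp.toLp 2 (a • u + b • v) ∈
      Submodule.span ℝ {WithLp.toLp 2 u, WithLp.toLp 2 v} :=
    Submodule.mem_span_pair.2 ⟨a, b, rfl⟩
  have hinner : 0 ≤ inner ℝ (WithLp.toLp 2 v) (WithLp.toLp 2 u) := by
    simpa [PiLp.inner_apply] using huv
  simp only [vecNorm_eq_norm_toLp two_ne_zero, WithLp.toLp_sub] at hu hv hpos hz2 ⊢
  have bound := seminorm_le_of_mem_span_pair (euclideanLpSeminorm ι q) hu hv hinner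
    (norm_sub_pos_iff.1 hpos) hz'
  simpa only [euclideanLpSeminorm_toLp, hz2, mul_one, add_comm] using bound

end VecNorm

/-- Let `q* ∈ [1,2]`, and let `u, v` be unit vectors with `⟨u,v⟩ ≥ 0`,
`‖v‖_{q*} ≤ κ₁`, `‖u‖_{q*} ≤ κ₂`, and `γ = ‖u − v‖₂ > 0`. Then every unit vector `z` in the
span of `{u, v}` satisfies `‖z‖_{q*} ≤ (2√2/γ)(κ₁ + κ₂)`. -/
theorem span_sparsity_bound {n : ℕ} (qs : ℝ) (hqs1 : 1 ≤ qs) (hqs2 : qs ≤ 2)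
    (u v : Fin n → ℝ) (hu : vecNorm 2 u = 1) (hv : vecNorm 2 v = 1)
    (huv : 0 ≤ ∑ i, u i * v i)
    (κ₁ κ₂ : ℝ) (hvq : vecNorm (ENNReal.ofReal qs) v ≤ κ₁)
    (huq : vecNorm (ENNReal.ofReal qs) u ≤ κ₂)
    (γ : ℝ) (hγ : γ = vecNorm 2 (u - v)) (hγ0 : 0 < γ) :
    ∀ z ∈ Submodule.span ℝ ({u, v} : Set (Fin n → ℝ)), vecNorm 2 z = 1 →
      vecNorm (ENNReal.ofReal qs) z ≤ 2 * Real.sqrt 2 / γ * (κ₁ + κ₂) := by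
  intro z hz hz2
  subst hγ
  refine (span_sparsity_bound_general (ENNReal.one_le_ofReal.2 hqs1) hu hv huv hγ0 hz hz2).trans ?_
  gcongr
  · exact add_nonneg (vecNorm_nonneg _ v) (vecNorm_nonneg _ u)
  · linarith [Real.sqrt_nonneg 2]
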